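/- For every one-dimensional stochastic cellular automaton A = (Q,R,V,V',f) with explicit global function F_A, there exists a correlation-free stochastic cellular automaton B with state set Q_B = Q ⊕ (Q × R), random symbols R, and explicit global function F_B such that, writing I : Q^ℤ → Q_B^ℤ for the cell-by-cell extension of the left injection i : Q → Q_B: (1) the image I(Q^ℤ) is stable under two steps of B, i.e. for every c ∈ Q^ℤ and all s, s' ∈ R^ℤ, F_B(F_B(I(c),s),s') ∈ I(Q^ℤ); and (2) the two-step dynamics of B restricted to I(Q^ℤ) reproduces the stochastic global function of A: for every c ∈ Q^ℤ, the pushforward of ν_R ⊗ ν_R under (s,s') ↦ F_B(F_B(I(c),s),s') equals the pushforward of ν_R under s ↦ I(F_A(c,s)). -/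

import Mathlib

open MeasureTheory

/-- A one-dimensional stochastic cellular automaton (SCA): states `Q`, random symbols `R`,
two finite neighbourhoods `V, V' ⊆ ℤ` and a local transition function `f`. -/
structure SCA (Q R : Type*) where
  V : Finset ℤ
  V' : Finset ℤ
  f : (V → Q) → (V' → R) → Q

namespace SCA

variable {Q R : Type*}

/-- The explicit global function `F : Q^ℤ × R^ℤ → Q^ℤ` of an SCA. -/
def F (A : SCA Q R) (c : ℤ → Q) (s : ℤ → R) : ℤ → Q :=
  fun z => A.f (fun v => c (z + (v : ℤ))) (fun v => s (z + (v : ℤ)))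

/-- The `t`-th iterate of the explicit global function:
`F^0(c) = c` and `F^{t+1}(c, s¹, …, s^{t+1}) = F (F^t(c, s¹, …, s^t), s^{t+1})`. -/
def iter (A : SCA Q R) : (t : ℕ) → (ℤ → Q) → (Fin t → (ℤ → R)) → (ℤ → Q)
  | 0, c, _ => c
  | t + 1, c, s => A.F (A.iter t c fun i => s i.castSucc) (s (Fin.last t))

end SCA

/-- `ν` is the uniform product (Bernoulli) probability measure on `ℤ → R`:
a probability measure giving each finite cylinder its uniform probability. -/
def IsUniformProduct {R : Type*} [Fintype R] [MeasurableSpace R]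
    (ν : Measure (ℤ → R)) : Prop :=
  IsProbabilityMeasure ν ∧
    ∀ (t : Finset ℤ) (g : ℤ → R),
      ν {s | ∀ i ∈ t, s i = g i} = (Fintype.card R : ENNReal)⁻¹ ^ t.card

/-- A correlation-free stochastic cellular automaton (CFCA): an SCA with `V' = {0}`,
i.e. each cell uses only its own random symbol. -/
structure CFCA (Q R : Type*) where
  V : Finset ℤ
  f : (V → Q) → R → Q

namespace CFCA

variable {Q R : Type*}

/-- The explicit global function of a CFCA. -/
def F (A : CFCA Q R) (c : ℤ → Q) (s : ℤ → R) : ℤ → Q :=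
  fun z => A.f (fun v => c (z + (v : ℤ))) (s z)

/-- The `t`-th iterate of the explicit global function of a CFCA. -/
def iter (A : CFCA Q R) : (t : ℕ) → (ℤ → Q) → (Fin t → (ℤ → R)) → (ℤ → Q)
  | 0, c, _ => c
  | t + 1, c, s => A.F (A.iter t c fun i => s i.castSucc) (s (Fin.last t))

end CFCA

/-!
The simulating automaton spends its first step drawing one random symbol in every cell and storing
it in the state. The stored symbols of distant cells can then be read through the ordinary
neighbourhood, so a second step can apply the local function of `A`. The result is exactly
`F_A(c, s)`, where `s` is the configuration drawn first, and does not depend on the second one.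
-/

theorem map_prod_comp_fst {α β γ : Type*} [MeasurableSpace α] [MeasurableSpace β]
    [MeasurableSpace γ] {g : α → γ} (hg : Measurable g) (μ : Measure α) (ν : Measure β)
    [IsProbabilityMeasure ν] : (μ.prod ν).map (fun p => g p.1) = μ.map g :=
  calc (μ.prod ν).map (g ∘ Prod.fst)
      = ((μ.prod ν).map Prod.fst).map g := (Measure.map_map hg measurable_fst).symm
    _ = μ.map g := by rw [measurePreserving_fst.map_eq]

namespace SCA

variable {Q R : Type*}

/-- The correlation-free automaton simulating `A` in two steps. A cell in state `inl q` stores its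
random symbol `r` by moving to `inr (q, r)`; a cell in state `inr _` applies the local function of
`A` to the states and stored symbols of its neighbours. On configurations mixing both kinds of
states, a neighbour that stores no symbol is given the current symbol of the reading cell. -/
def drawThenUpdate (A : SCA Q R) : CFCA (Q ⊕ Q × R) R where
  V := insert 0 (A.V ∪ A.V')
  f x r :=
    match x ⟨0, Finset.mem_insert_self _ _⟩ with
    | .inl q => .inr (q, r)
    | .inr _ => .inl <| A.f
        (fun v => Sum.elim id Prod.fst
          (x ⟨v, Finset.mem_insert_of_mem (Finset.mem_union_left _ v.2)⟩))
        (fun v => Sum.elim (fun _ => r) Prod.snd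
          (x ⟨v, Finset.mem_insert_of_mem (Finset.mem_union_right _ v.2)⟩))

theorem drawThenUpdate_F_inl (A : SCA Q R) (c : ℤ → Q) (s : ℤ → R) :
    A.drawThenUpdate.F (fun z => .inl (c z)) s = fun z => .inr (c z, s z) := by
  funext z
  simp [CFCA.F, drawThenUpdate]

theorem drawThenUpdate_F_inr (A : SCA Q R) (c : ℤ → Q) (s s' : ℤ → R) :
    A.drawThenUpdate.F (fun z => .inr (c z, s z)) s' = fun z => .inl (A.F c s z) :=
  rfl

theorem drawThenUpdate_F_F_inl (A : SCA Q R) (c : ℤ → Q) (s s' : ℤ → R) :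
    A.drawThenUpdate.F (A.drawThenUpdate.F (fun z => .inl (c z)) s) s' =
      fun z => .inl (A.F c s z) := by
  rw [drawThenUpdate_F_inl, drawThenUpdate_F_inr]

theorem measurable_F [MeasurableSpace Q] [Countable R] [MeasurableSpace R]
    [MeasurableSingletonClass R] (A : SCA Q R) (c : ℤ → Q) : Measurable (A.F c) := by
  refine measurable_pi_lambda _ fun z => ?_
  have measurable_window : Measurable fun (s : ℤ → R) (v : A.V') => s (z + v) :=
    measurable_pi_lambda _ fun v => measurable_pi_apply _
  exact (measurable_of_countable (A.f fun v => c (z + v))).comp measurable_window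

end SCA

theorem stmt16_general {Q R : Type*} [MeasurableSpace Q]
    [Countable R] [MeasurableSpace R] [MeasurableSingletonClass R] (A : SCA Q R) :
    ∃ B : CFCA (Q ⊕ Q × R) R,
      (∀ (c : ℤ → Q) (s s' : ℤ → R),
        B.F (B.F (fun z => Sum.inl (c z)) s) s' ∈
          Set.range fun (c' : ℤ → Q) (z : ℤ) => (Sum.inl (c' z) : Q ⊕ Q × R)) ∧
      (∀ (μ μ' : Measure (ℤ → R)) [IsProbabilityMeasure μ'] (c : ℤ → Q),
        (μ.prod μ').map
            (fun p : (ℤ → R) × (ℤ → R) => B.F (B.F (fun z => Sum.inl (c z)) p.1) p.2)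
          = μ.map fun s => fun z => (Sum.inl (A.F c s z) : Q ⊕ Q × R)) := by
  refine ⟨A.drawThenUpdate, fun c s s' => ⟨A.F c s, (A.drawThenUpdate_F_F_inl c s s').symm⟩,
    fun μ μ' _ c => ?_⟩
  have measurable_inl_F : Measurable fun s z => (Sum.inl (A.F c s z) : Q ⊕ Q × R) :=
    measurable_pi_lambda _ fun z => measurable_inl.comp ((A.measurable_F c).eval)
  simp only [SCA.drawThenUpdate_F_F_inl]
  exact map_prod_comp_fst measurable_inl_F μ μ'

/-- Every SCA `A` on `(Q,R)` is simulated, in two steps and in restriction to the image of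
the cell-by-cell injection `I : Q^ℤ → (Q ⊕ Q×R)^ℤ`, by a correlation-free SCA `B` on states
`Q ⊕ Q × R` and random symbols `R`. -/
theorem stmt16 {Q R : Type*}
    [Fintype Q] [Nonempty Q] [MeasurableSpace Q] [MeasurableSingletonClass Q]
    [Fintype R] [Nonempty R] [MeasurableSpace R] [MeasurableSingletonClass R]
    (A : SCA Q R) (ν : Measure (ℤ → R)) (hν : IsUniformProduct ν) :
    ∃ B : CFCA (Q ⊕ Q × R) R,
      (∀ (c : ℤ → Q) (s s' : ℤ → R),
        B.F (B.F (fun z => Sum.inl (c z)) s) s' ∈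
          Set.range fun (c' : ℤ → Q) (z : ℤ) => (Sum.inl (c' z) : Q ⊕ Q × R)) ∧
      (∀ c : ℤ → Q,
        (ν.prod ν).map
            (fun p : (ℤ → R) × (ℤ → R) => B.F (B.F (fun z => Sum.inl (c z)) p.1) p.2)
          = ν.map fun s => fun z => (Sum.inl (A.F c s z) : Q ⊕ Q × R)) := by
  have := hν.1
  obtain ⟨B, stable, law_eq⟩ := stmt16_general A
  exact ⟨B, stable, law_eq ν ν⟩
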